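/- Let J(x) = x·tanh x, J'(ξ) = tanh ξ + ξ(1 − tanh²ξ), Λ(ξ) = J'(ξ)² − 4J(ξ), and Ω(ξ,η,ζ) = J(ξ)² + J(η)² + J(ζ)² − 2J(ξ)J(η) − 2J(η)J(ζ) − 2J(ζ)J(ξ). Then for every fixed real ξ, the function η ↦ η⁻²·Ω(ξ, η, −ξ−η) tends to Λ(ξ) as η → 0 through nonzero values. -/

import Mathlib

open Filter Topology

noncomputable def J (x : ℝ) : ℝ := x * Real.tanh x

noncomputable def J' (ξ : ℝ) : ℝ := Real.tanh ξ + ξ * (1 - Real.tanh ξ ^ 2)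

noncomputable def Λ (ξ : ℝ) : ℝ := J' ξ ^ 2 - 4 * J ξ

noncomputable def Ω (ξ η ζ : ℝ) : ℝ :=
  J ξ ^ 2 + J η ^ 2 + J ζ ^ 2 - 2 * J ξ * J η - 2 * J η * J ζ - 2 * J ζ * J ξ

/-! For `a = J ξ`, `b = J η`, `c = J ζ` the resonance function equals
`(c - a)² + b (b - 2 (a + c))`. Since `J` is even, `ζ = -(ξ + η)` gives `c = J (ξ + η)`, so after
division by `η²` the square tends to `J' ξ ^ 2`, and since `J η / η² = tanh η / η → 1` the other
term tends to `-4 J ξ`. -/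

/-- The triangle form, or Källén function; the resonance function `Ω ξ η ζ` is its value at
`J ξ, J η, J ζ`. -/
def triangleForm {R : Type*} [CommRing R] (a b c : R) : R :=
  a ^ 2 + b ^ 2 + c ^ 2 - 2 * a * b - 2 * b * c - 2 * c * a

theorem triangleForm_eq_sub_sq_add {R : Type*} [CommRing R] (a b c : R) :
    triangleForm a b c = (c - a) ^ 2 + b * (b - 2 * (a + c)) := by
  unfold triangleForm
  ring

section NormedField

variable {𝕜 : Type*} [NontriviallyNormedField 𝕜] {f g : 𝕜 → 𝕜} {f' x k : 𝕜}

theorem tendsto_zero_of_tendsto_inv_sq_mul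
    (hg : Tendsto (fun h ↦ (h ^ 2)⁻¹ * g h) (𝓝[≠] 0) (𝓝 k)) :
    Tendsto g (𝓝[≠] 0) (𝓝 0) := by
  have sq_tendsto : Tendsto (fun h : 𝕜 ↦ h ^ 2) (𝓝[≠] 0) (𝓝 0) :=
    ((continuous_pow 2).tendsto' 0 0 (zero_pow two_ne_zero)).mono_left nhdsWithin_le_nhds
  have product_tendsto : Tendsto (fun h ↦ h ^ 2 * ((h ^ 2)⁻¹ * g h)) (𝓝[≠] 0) (𝓝 0) := by
    simpa only [zero_mul] using sq_tendsto.mul hg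
  refine product_tendsto.congr' ?_
  filter_upwards [self_mem_nhdsWithin] with h hh
  exact mul_inv_cancel_left₀ (pow_ne_zero 2 hh) (g h)

theorem tendsto_inv_sq_mul_triangleForm (hf : HasDerivAt f f' x)
    (hg : Tendsto (fun h ↦ (h ^ 2)⁻¹ * g h) (𝓝[≠] 0) (𝓝 k)) :
    Tendsto (fun h ↦ (h ^ 2)⁻¹ * triangleForm (f x) (g h) (f (x + h))) (𝓝[≠] 0)
      (𝓝 (f' ^ 2 - 4 * f x * k)) := by
  have shift_tendsto : Tendsto (fun h ↦ f (x + h)) (𝓝[≠] 0) (𝓝 (f x)) :=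
    (hf.continuousAt.tendsto.comp
      ((continuous_const_add x).tendsto' 0 x (add_zero x))).mono_left nhdsWithin_le_nhds
  have cofactor_tendsto : Tendsto (fun h ↦ g h - 2 * (f x + f (x + h))) (𝓝[≠] 0)
      (𝓝 (0 - 2 * (f x + f x))) :=
    (tendsto_zero_of_tendsto_inv_sq_mul hg).sub ((shift_tendsto.const_add _).const_mul 2)
  convert (hf.tendsto_slope_zero.pow 2).add (hg.mul cofactor_tendsto) using 2 with h
  · rw [triangleForm_eq_sub_sq_add, smul_eq_mul]
    ring
  · ring

end NormedField

theorem hasDerivAt_tanh (x : ℝ) : HasDerivAt Real.tanh (1 - Real.tanh x ^ 2) x := by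
  have tanh_eq : Real.tanh = Real.sinh / Real.cosh := funext Real.tanh_eq_sinh_div_cosh
  have cosh_ne_zero : Real.cosh x ≠ 0 := (Real.cosh_pos x).ne'
  rw [Real.tanh_eq_sinh_div_cosh, tanh_eq]
  refine ((Real.hasDerivAt_sinh x).div (Real.hasDerivAt_cosh x) cosh_ne_zero).congr_deriv ?_
  field_simp

theorem hasDerivAt_J (x : ℝ) : HasDerivAt J (J' x) x :=
  ((hasDerivAt_id x).mul (hasDerivAt_tanh x)).congr_deriv <| by
    simp only [J', id_eq, one_mul]

theorem J_neg (x : ℝ) : J (-x) = J x := by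
  rw [J, J, Real.tanh_neg, neg_mul_neg]

theorem tendsto_inv_sq_mul_J : Tendsto (fun η ↦ (η ^ 2)⁻¹ * J η) (𝓝[≠] 0) (𝓝 1) := by
  have slope_tendsto : Tendsto (fun η ↦ η⁻¹ * Real.tanh η) (𝓝[≠] 0) (𝓝 1) := by
    simpa using (hasDerivAt_tanh 0).tendsto_slope_zero
  refine slope_tendsto.congr' ?_
  filter_upwards [self_mem_nhdsWithin] with η (hη : η ≠ 0)
  rw [J]
  field_simp

theorem Ω_neg_sub_eq_triangleForm (ξ η : ℝ) :
    Ω ξ η (-ξ - η) = triangleForm (J ξ) (J η) (J (ξ + η)) := by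
  rw [← neg_add', Ω, J_neg, triangleForm]

/-- On the line `η = 0` of the resonant plane, `η⁻² Ω(ξ,η,−ξ−η)` has the limit
`Λ(ξ) = J'(ξ)² − 4 J(ξ)`. -/
theorem resonance_limit_eta_zero (ξ : ℝ) :
    Tendsto (fun η : ℝ => (η ^ 2)⁻¹ * Ω ξ η (-ξ - η)) (𝓝[≠] (0 : ℝ)) (𝓝 (Λ ξ)) := by
  simp only [Ω_neg_sub_eq_triangleForm]
  rw [Λ, ← mul_one (4 * J ξ)]
  exact tendsto_inv_sq_mul_triangleForm (hasDerivAt_J ξ) tendsto_inv_sq_mul_J
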